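/- For every n : ℕ, the number of model structures on the category [n] is exactly the binomial coefficient C(2n+1, n). -/

import Mathlib

universe v u

open CategoryTheory

section ModelDefs

variable {C : Type u} [Category.{v} C]

/-- `f` is a retract of `g` in the arrow category of `C`. -/
def IsRetractOfHom {X Y X' Y' : C} (f : X ⟶ Y) (g : X' ⟶ Y') : Prop :=
  ∃ (a : X ⟶ X') (b : Y ⟶ Y') (a' : X' ⟶ X) (b' : Y' ⟶ Y),
    a ≫ a' = 𝟙 X ∧ b ≫ b' = 𝟙 Y ∧ f ≫ b = a ≫ g ∧ g ≫ b' = a' ≫ f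

/-- A class of morphisms is stable under retracts (in the arrow category). -/
def StableUnderRetractsHom (P : MorphismProperty C) : Prop :=
  ∀ ⦃X Y X' Y' : C⦄ (f : X ⟶ Y) (g : X' ⟶ Y'), IsRetractOfHom f g → P g → P f

/-- A (Quillen) model structure on a category `C`: three classes of morphisms —
weak equivalences, fibrations, cofibrations — each closed under composition and
retracts, the weak equivalences satisfying two-out-of-three, cofibrations
(resp. acyclic cofibrations) having the left lifting property against acyclic
fibrations (resp. fibrations), and every morphism factoring as a cofibration
followed by an acyclic fibration and as an acyclic cofibration followed by a
fibration. A model category is a category with all finite limits and colimits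
equipped with such a structure. -/
structure ModelStructure (C : Type u) [Category.{v} C] where
  weq : MorphismProperty C
  fib : MorphismProperty C
  cof : MorphismProperty C
  weq_comp : weq.IsStableUnderComposition
  fib_comp : fib.IsStableUnderComposition
  cof_comp : cof.IsStableUnderComposition
  weq_retract : StableUnderRetractsHom weq
  fib_retract : StableUnderRetractsHom fib
  cof_retract : StableUnderRetractsHom cof
  weq_two_out_of_three : weq.HasTwoOutOfThreeProperty
  lift_cof_trivFib : ∀ ⦃A B X Y : C⦄ (i : A ⟶ B) (p : X ⟶ Y),
    cof i → fib p → weq p → HasLiftingProperty i p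
  lift_trivCof_fib : ∀ ⦃A B X Y : C⦄ (i : A ⟶ B) (p : X ⟶ Y),
    cof i → weq i → fib p → HasLiftingProperty i p
  factor_cof_trivFib : ∀ ⦃X Y : C⦄ (f : X ⟶ Y),
    ∃ (Z : C) (i : X ⟶ Z) (p : Z ⟶ Y), cof i ∧ fib p ∧ weq p ∧ i ≫ p = f
  factor_trivCof_fib : ∀ ⦃X Y : C⦄ (f : X ⟶ Y),
    ∃ (Z : C) (i : X ⟶ Z) (p : Z ⟶ Y), cof i ∧ weq i ∧ fib p ∧ i ≫ p = f

end ModelDefs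

/-- A transfer system `R` on a linear order (a partial order refining `≤` and stable under
pullback), together with an order-convex relation `W` containing it. -/
@[ext]
structure ConvexTransferPair (α : Type*) [LinearOrder α] where
  R : α → α → Prop
  W : α → α → Prop
  R_refl : ∀ x, R x x
  R_trans : ∀ {x y z}, R x y → R y z → R x z
  R_restrict : ∀ {x y z}, R x z → x ≤ y → y ≤ z → R x y
  R_sub : ∀ {x y}, R x y → W x y
  W_le : ∀ {x y}, W x y → x ≤ y
  W_trans : ∀ {x y z}, W x y → W y z → W x z
  W_left : ∀ {x y z}, W x z → x ≤ y → y ≤ z → W x y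
  W_right : ∀ {x y z}, W x z → x ≤ y → y ≤ z → W y z

section PreorderLifting

variable {α : Type*} [Preorder α]

lemma morphismProperty_of_parallel {P : MorphismProperty α} {x y : α} {f g : x ⟶ y}
    (h : P f) : P g :=
  Subsingleton.elim f g ▸ h

lemma hasLiftingProperty_of_le {a b x y : α} (i : a ⟶ b) (p : x ⟶ y)
    (h : a ≤ x → b ≤ y → b ≤ x) : HasLiftingProperty i p :=
  ⟨fun {f g} _ => ⟨⟨homOfLE (h (leOfHom f) (leOfHom g)), rfl, rfl⟩⟩⟩

lemma le_of_hasLiftingProperty {a b x y : α} (i : a ⟶ b) (p : x ⟶ y)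
    (h : HasLiftingProperty i p) (hax : a ≤ x) (hby : b ≤ y) : b ≤ x := by
  have sq : CommSq (homOfLE hax) i p (homOfLE hby) := ⟨rfl⟩
  exact leOfHom (h.sq_hasLift sq).exists_lift.some.l

end PreorderLifting

section PartialOrderRetracts

variable {α : Type*} [PartialOrder α]

lemma stableUnderRetractsHom_of_partialOrder (P : MorphismProperty α) :
    StableUnderRetractsHom P := by
  rintro X Y X' Y' f g ⟨a, b, a', b', -⟩ hg
  obtain rfl := le_antisymm (leOfHom a) (leOfHom a')
  obtain rfl := le_antisymm (leOfHom b) (leOfHom b')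
  exact morphismProperty_of_parallel hg

end PartialOrderRetracts

namespace ModelStructure

section PartialOrder

variable {α : Type*} [PartialOrder α] (M : ModelStructure α)

lemma trivFib_id {x : α} (f : x ⟶ x) : M.fib f ∧ M.weq f := by
  obtain ⟨z, i, p, -, hp, hw, -⟩ := M.factor_cof_trivFib f
  obtain rfl := le_antisymm (leOfHom i) (leOfHom p)
  exact ⟨morphismProperty_of_parallel hp, morphismProperty_of_parallel hw⟩

lemma trivFib_restrict {x y z : α} (f : x ⟶ z) (g : x ⟶ y) (hyz : y ≤ z)
    (hf : M.fib f) (hw : M.weq f) : M.fib g ∧ M.weq g := by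
  obtain ⟨w, i, p, hi, hp, hpw, -⟩ := M.factor_cof_trivFib g
  have hwx := le_of_hasLiftingProperty i f (M.lift_cof_trivFib i f hi hf hw) le_rfl
    ((leOfHom p).trans hyz)
  obtain rfl := le_antisymm hwx (leOfHom i)
  exact ⟨morphismProperty_of_parallel hp, morphismProperty_of_parallel hpw⟩

lemma weq_of_trivCof {x y w : α} (f : x ⟶ w) (g : y ⟶ w) (hxy : x ≤ y)
    (hf : M.cof f) (hw : M.weq f) : M.weq g := by
  obtain ⟨v, j, q, hj, hjw, hq, -⟩ := M.factor_trivCof_fib g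
  have hwv := le_of_hasLiftingProperty f q (M.lift_trivCof_fib f q hf hw hq)
    (hxy.trans (leOfHom j)) le_rfl
  obtain rfl := le_antisymm hwv (leOfHom q)
  exact morphismProperty_of_parallel hjw

lemma cof_iff {x y : α} (f : x ⟶ y) :
    M.cof f ↔ ∀ ⦃u v : α⦄ (p : u ⟶ v), M.fib p ∧ M.weq p → HasLiftingProperty f p := by
  refine ⟨fun hf u v p hp => M.lift_cof_trivFib f p hf hp.1 hp.2, fun h => ?_⟩
  obtain ⟨w, i, p, hi, hp, hw, -⟩ := M.factor_cof_trivFib f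
  obtain rfl := le_antisymm (leOfHom p)
    (le_of_hasLiftingProperty f p (h p ⟨hp, hw⟩) (leOfHom i) le_rfl)
  exact morphismProperty_of_parallel hi

lemma fib_iff {x y : α} (f : x ⟶ y) :
    M.fib f ↔ ∀ ⦃u v : α⦄ (i : u ⟶ v), M.cof i ∧ M.weq i → HasLiftingProperty i f := by
  refine ⟨fun hf u v i hi => M.lift_trivCof_fib i f hi.1 hi.2 hf, fun h => ?_⟩
  obtain ⟨w, i, p, hi, hw, hp, -⟩ := M.factor_trivCof_fib f
  obtain rfl := le_antisymm (leOfHom i)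
    (le_of_hasLiftingProperty i f (h i ⟨hi, hw⟩) le_rfl (leOfHom p))
  exact morphismProperty_of_parallel hp

/-- A model structure on a poset is determined by its weak equivalences and its acyclic
fibrations. -/
lemma ext_of_trivFib {M N : ModelStructure α}
    (hw : ∀ ⦃x y : α⦄ (f : x ⟶ y), M.weq f ↔ N.weq f)
    (hf : ∀ ⦃x y : α⦄ (f : x ⟶ y), M.fib f ∧ M.weq f ↔ N.fib f ∧ N.weq f) : M = N := by
  have hc : ∀ ⦃x y : α⦄ (f : x ⟶ y), M.cof f ↔ N.cof f := fun x y f => by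
    simp only [cof_iff, hf]
  have hfib : ∀ ⦃x y : α⦄ (f : x ⟶ y), M.fib f ↔ N.fib f := fun x y f => by
    simp only [fib_iff, hc, hw]
  have ew : M.weq = N.weq := by ext x y f; exact hw f
  have ec : M.cof = N.cof := by ext x y f; exact hc f
  have ef : M.fib = N.fib := by ext x y f; exact hfib f
  cases M
  cases N
  cases ew
  cases ec
  cases ef
  rfl

end PartialOrder

section LinearOrder

variable {α : Type*} [LinearOrder α] (M : ModelStructure α)

lemma weq_left {x y z : α} (f : x ⟶ y) (g : y ⟶ z) (h : M.weq (f ≫ g)) : M.weq f := by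
  have := M.weq_two_out_of_three
  have := M.weq_comp
  obtain ⟨w, i, p, hi, hp, hpw, e⟩ := M.factor_cof_trivFib (f ≫ g)
  have hiw : M.weq i := M.weq.of_postcomp i p hpw (e ▸ h)
  rcases le_total y w with hyw | hwy
  · exact M.weq.of_postcomp f (homOfLE hyw) (M.weq_of_trivCof i _ (leOfHom f) hi hiw)
      (morphismProperty_of_parallel hiw)
  · exact morphismProperty_of_parallel
      (M.weq.comp_mem i (homOfLE hwy) hiw (M.trivFib_restrict p _ (leOfHom g) hp hpw).2)

lemma weq_right {x y z : α} (f : x ⟶ y) (g : y ⟶ z) (h : M.weq (f ≫ g)) : M.weq g :=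
  have := M.weq_two_out_of_three
  M.weq.of_precomp f g (M.weq_left f g h) h

/-- The acyclic fibrations and the weak equivalences of a model structure. -/
def toPair : ConvexTransferPair α where
  R x y := ∃ f : x ⟶ y, M.fib f ∧ M.weq f
  W x y := ∃ f : x ⟶ y, M.weq f
  R_refl x := ⟨𝟙 x, M.trivFib_id _⟩
  R_trans := by
    rintro x y z ⟨f, hf, hfw⟩ ⟨g, hg, hgw⟩
    have := M.fib_comp
    have := M.weq_comp
    exact ⟨f ≫ g, M.fib.comp_mem _ _ hf hg, M.weq.comp_mem _ _ hfw hgw⟩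
  R_restrict := by
    rintro x y z ⟨f, hf, hw⟩ hxy hyz
    exact ⟨homOfLE hxy, M.trivFib_restrict f _ hyz hf hw⟩
  R_sub := fun ⟨f, _, hw⟩ => ⟨f, hw⟩
  W_le := fun ⟨f, _⟩ => leOfHom f
  W_trans := by
    rintro x y z ⟨f, hf⟩ ⟨g, hg⟩
    have := M.weq_comp
    exact ⟨f ≫ g, M.weq.comp_mem _ _ hf hg⟩
  W_left := by
    rintro x y z ⟨f, hf⟩ hxy hyz
    exact ⟨homOfLE hxy, M.weq_left _ (homOfLE hyz) (morphismProperty_of_parallel hf)⟩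
  W_right := by
    rintro x y z ⟨f, hf⟩ hxy hyz
    exact ⟨homOfLE hyz, M.weq_right (homOfLE hxy) _ (morphismProperty_of_parallel hf)⟩

lemma toPair_injective : Function.Injective (toPair (α := α)) := by
  intro M N h
  refine ext_of_trivFib (fun x y f => ?_) (fun x y f => ?_)
  · have hW : M.toPair.W x y ↔ N.toPair.W x y := by rw [h]
    constructor
    · intro hf
      obtain ⟨g, hg⟩ := hW.1 ⟨f, hf⟩
      exact morphismProperty_of_parallel hg
    · intro hf
      obtain ⟨g, hg⟩ := hW.2 ⟨f, hf⟩
      exact morphismProperty_of_parallel hg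
  · have hR : M.toPair.R x y ↔ N.toPair.R x y := by rw [h]
    constructor
    · intro hf
      obtain ⟨g, hg⟩ := hR.1 ⟨f, hf⟩
      rwa [Subsingleton.elim f g]
    · intro hf
      obtain ⟨g, hg⟩ := hR.2 ⟨f, hf⟩
      rwa [Subsingleton.elim f g]

end LinearOrder

end ModelStructure

namespace ConvexTransferPair

section LinearOrder

variable {α : Type*} [LinearOrder α] (P : ConvexTransferPair α)

lemma R_le {x y : α} (h : P.R x y) : x ≤ y := P.W_le (P.R_sub h)

lemma W_refl (x : α) : P.W x x := P.R_sub (P.R_refl x)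

/-- For `x ≤ y`, the arrow `x ⟶ y` has the left lifting property against `P.R`. -/
def Cof (x y : α) : Prop := ∀ u, x ≤ u → P.R u y → u = y

/-- For `x ≤ y`, the arrow `x ⟶ y` has the right lifting property against the arrows in `P.W`
satisfying `P.Cof`. -/
def Fib (x y : α) : Prop := ∀ b, b ≤ y → P.Cof x b → P.W x b → b = x

variable {P}

lemma Cof.comp {x y z : α} (hyz : y ≤ z) (h₁ : P.Cof x y) (h₂ : P.Cof y z) : P.Cof x z := by
  intro u hxu hu
  rcases le_total y u with h | h
  · exact h₂ u h hu
  · have := h₁ u hxu (P.R_restrict hu h hyz)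
    exact h₂ u this.ge hu

lemma Cof.mono {x y z : α} (hxy : x ≤ y) (h : P.Cof x z) : P.Cof y z :=
  fun u hu => h u (hxy.trans hu)

lemma Fib.comp {x y z : α} (hxy : x ≤ y) (h₁ : P.Fib x y) (h₂ : P.Fib y z) : P.Fib x z := by
  intro b hbz hc hw
  rcases le_total b y with h | h
  · exact h₁ b h hc hw
  · exact h₁ b (h₂ b hbz (hc.mono hxy) (P.W_right hw hxy h)).le hc hw

lemma Cof.lift {a b x y : α} (h : P.Cof a b) (hR : P.R x y) (hax : a ≤ x) (hby : b ≤ y) :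
    b ≤ x := by
  rcases le_total b x with hbx | hxb
  · exact hbx
  · exact (h x hax (P.R_restrict hR hxb hby)).ge

lemma Fib.lift {a b x y : α} (h : P.Fib x y) (hc : P.Cof a b) (hw : P.W a b) (hax : a ≤ x)
    (hby : b ≤ y) : b ≤ x := by
  rcases le_total b x with hbx | hxb
  · exact hbx
  · exact (h b hby (hc.mono hax) (P.W_right hw hax hxb)).le

lemma fib_of_R {x y : α} (h : P.R x y) : P.Fib x y := by
  intro b hby hc hw
  exact (hc x le_rfl (P.R_restrict h (P.W_le hw) hby)).symm

variable [Finite α]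

variable (P) in
lemma exists_cof_R {x y : α} (hxy : x ≤ y) : ∃ u, x ≤ u ∧ P.Cof x u ∧ P.R u y := by
  obtain ⟨u, ⟨hxu, hu⟩, hmin⟩ :=
    (Set.toFinite {u | x ≤ u ∧ P.R u y}).exists_minimal ⟨y, hxy, P.R_refl y⟩
  exact ⟨u, hxu, fun v hxv hv =>
    le_antisymm (P.R_le hv) (hmin ⟨hxv, P.R_trans hv hu⟩ (P.R_le hv)), hu⟩

variable (P) in
lemma exists_cof_W_fib {x y : α} (hxy : x ≤ y) :
    ∃ b, b ≤ y ∧ P.Cof x b ∧ P.W x b ∧ P.Fib b y := by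
  obtain ⟨b, ⟨hby, hc, hw⟩, hmax⟩ :=
    (Set.toFinite {b | b ≤ y ∧ P.Cof x b ∧ P.W x b}).exists_maximal
      ⟨x, hxy, fun u hu hR => le_antisymm (P.R_le hR) hu, P.W_refl x⟩
  refine ⟨b, hby, hc, hw, fun b' hb' hc' hw' => ?_⟩
  have hbb' := P.W_le hw'
  exact le_antisymm (hmax ⟨hb', hc.comp hbb' hc', P.W_trans hw hw'⟩ hbb') hbb'

lemma R_of_fib {x y : α} (hw : P.W x y) (h : P.Fib x y) : P.R x y := by
  obtain ⟨u, hxu, hc, hR⟩ := P.exists_cof_R (P.W_le hw)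
  obtain rfl := h u (P.R_le hR) hc (P.W_left hw hxu (P.R_le hR))
  exact hR

variable (P) in
/-- The model structure with acyclic fibrations `P.R` and weak equivalences `P.W`. -/
def toModelStructure : ModelStructure α where
  weq x y _ := P.W x y
  fib x y _ := P.Fib x y
  cof x y _ := P.Cof x y
  weq_comp := ⟨fun _ _ h₁ h₂ => P.W_trans h₁ h₂⟩
  fib_comp := ⟨fun f _ h₁ h₂ => h₁.comp (leOfHom f) h₂⟩
  cof_comp := ⟨fun _ g h₁ h₂ => h₁.comp (leOfHom g) h₂⟩
  weq_retract := stableUnderRetractsHom_of_partialOrder _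
  fib_retract := stableUnderRetractsHom_of_partialOrder _
  cof_retract := stableUnderRetractsHom_of_partialOrder _
  weq_two_out_of_three :=
    { comp_mem := fun _ _ h₁ h₂ => P.W_trans h₁ h₂
      of_postcomp := fun f g _ h => P.W_left h (leOfHom f) (leOfHom g)
      of_precomp := fun f g _ h => P.W_right h (leOfHom f) (leOfHom g) }
  lift_cof_trivFib _ _ _ _ i p hc hf hw :=
    hasLiftingProperty_of_le i p (Cof.lift hc (R_of_fib hw hf))
  lift_trivCof_fib _ _ _ _ i p hc hw hf := hasLiftingProperty_of_le i p (Fib.lift hf hc hw)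
  factor_cof_trivFib x y f := by
    obtain ⟨u, hxu, hc, hR⟩ := P.exists_cof_R (leOfHom f)
    exact ⟨u, homOfLE hxu, homOfLE (P.R_le hR), hc, fib_of_R hR, P.R_sub hR, rfl⟩
  factor_trivCof_fib x y f := by
    obtain ⟨b, hby, hc, hw, hf⟩ := P.exists_cof_W_fib (leOfHom f)
    exact ⟨b, homOfLE (P.W_le hw), homOfLE hby, hc, hw, hf, rfl⟩

lemma toPair_toModelStructure : P.toModelStructure.toPair = P := by
  ext x y
  · exact ⟨fun ⟨_, hf, hw⟩ => R_of_fib hw hf,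
      fun h => ⟨homOfLE (P.R_le h), fib_of_R h, P.R_sub h⟩⟩
  · exact ⟨fun ⟨_, hw⟩ => hw, fun h => ⟨homOfLE (P.W_le h), h⟩⟩

end LinearOrder

end ConvexTransferPair

lemma ModelStructure.toPair_bijective {α : Type*} [LinearOrder α] [Finite α] :
    Function.Bijective (ModelStructure.toPair (α := α)) :=
  ⟨toPair_injective, fun P => ⟨P.toModelStructure, P.toPair_toModelStructure⟩⟩

/-- Sequences of length `n + 1` starting at `k` in which every term exceeds the maximum of `1` and
the preceding term by at most `1`. -/
def TransferCode (n k : ℕ) : Type :=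
  {c : Fin (n + 1) → ℕ // c 0 = k ∧ ∀ i : Fin n, c i.succ ≤ max 1 (c i.castSucc) + 1}

namespace TransferCode

/-- Removing the first term of a sequence. -/
def succEquiv (n k : ℕ) :
    TransferCode (n + 1) k ≃ Σ i : Fin (max 1 k + 2), TransferCode n i where
  toFun c := ⟨⟨c.1 1, by
      have h := c.2.2 0
      rw [Fin.castSucc_zero, c.2.1, Fin.succ_zero_eq_one] at h
      omega⟩, Fin.tail c.1, rfl, fun i => c.2.2 i.succ⟩
  invFun p := ⟨Fin.cons k p.2.1, rfl, fun i => by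
    obtain ⟨j, d, hd, hs⟩ := p
    cases i using Fin.cases with
    | zero =>
      have := j.2
      simp only [Fin.cons_succ, hd, Fin.castSucc_zero, Fin.cons_zero]
      omega
    | succ i => exact hs i⟩
  left_inv c := by
    apply Subtype.ext
    funext i
    cases i using Fin.cases with
    | zero => exact c.2.1.symm
    | succ i => rfl
  right_inv p := by
    obtain ⟨⟨j, hj⟩, d, hd, hs⟩ := p
    obtain rfl : d 0 = j := hd
    rfl

lemma finite : ∀ n k : ℕ, Finite (TransferCode n k)
  | 0, k => by
    refine @Finite.of_subsingleton _ ⟨fun c d => Subtype.ext (funext fun i => ?_)⟩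
    rw [show i = 0 from Fin.fin_one_eq_zero i, c.2.1, d.2.1]
  | n + 1, k => by
    have := fun i => finite n i
    exact Finite.of_equiv _ (succEquiv n k).symm

lemma sum_choose (n k : ℕ) :
    ∑ i ∈ Finset.range (k + 2), (2 * n + max 1 i).choose n =
      (2 * (n + 1) + k).choose (n + 1) := by
  induction k with
  | zero =>
    have h₁ : (2 * n + 1 + 1).choose (n + 1) =
      (2 * n + 1).choose n + (2 * n + 1).choose (n + 1) := Nat.choose_succ_succ _ _
    have h₂ : (2 * n + 1).choose (n + 1) = (2 * n + 1).choose n :=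
      Nat.choose_symm_half n
    simp only [Finset.sum_range_succ, Finset.sum_range_zero]
    rw [show 2 * (n + 1) + 0 = 2 * n + 1 + 1 by ring, h₁, h₂]
    simp
  | succ k ih =>
    rw [Finset.sum_range_succ, ih, show 2 * (n + 1) + (k + 1) = 2 * (n + 1) + k + 1 by ring,
      Nat.choose_succ_succ, add_comm, show max 1 (k + 2) = k + 2 by omega,
      show 2 * n + (k + 2) = 2 * (n + 1) + k by ring]

lemma card (n k : ℕ) : Nat.card (TransferCode n k) = (2 * n + max 1 k).choose n := by
  induction n generalizing k with
  | zero =>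
    have : Unique (TransferCode 0 k) :=
      { default := ⟨fun _ => k, rfl, fun i => i.elim0⟩
        uniq := fun c => Subtype.ext (funext fun i => by rw [show i = 0 from Fin.fin_one_eq_zero i, c.2.1]) }
    simp
  | succ n ih =>
    have := fun i => finite n i
    rw [Nat.card_congr (succEquiv n k), Nat.card_sigma]
    simp only [ih]
    rw [Fin.sum_univ_eq_sum_range (fun i => (2 * n + max 1 i).choose n), sum_choose]

end TransferCode

namespace ConvexTransferPair

variable {n : ℕ} (P : ConvexTransferPair (Fin (n + 1)))

open Classical in
/-- The elements of `[n]` related to `z`. -/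
noncomputable def below (z : Fin (n + 1)) : Finset (Fin (n + 1)) := {x | P.R x z}

variable {P} in
lemma mem_below {x z : Fin (n + 1)} : x ∈ P.below z ↔ P.R x z := by simp [below]

open Classical in
/-- The code of a pair: the number of elements related to `z`, or `0` if `z` is minimal for
`P.W`. -/
noncomputable def code (z : Fin (n + 1)) : ℕ :=
  if ∃ y < z, P.W y z then (P.below z).card else 0

lemma card_below_pos (z : Fin (n + 1)) : 0 < (P.below z).card :=
  Finset.card_pos.2 ⟨z, mem_below.2 (P.R_refl z)⟩

lemma code_pos_iff (z : Fin (n + 1)) : 0 < P.code z ↔ ∃ y < z, P.W y z := by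
  unfold code
  split_ifs with h
  · exact iff_of_true (P.card_below_pos z) h
  · exact iff_of_false (lt_irrefl 0) h

lemma max_one_code (z : Fin (n + 1)) : max 1 (P.code z) = (P.below z).card := by
  unfold code
  split_ifs with h
  · exact max_eq_right (P.card_below_pos z)
  · have : P.below z = {z} := by
      ext x
      rw [mem_below, Finset.mem_singleton]
      refine ⟨fun hx => ?_, fun hx => hx ▸ P.R_refl x⟩
      by_contra hne
      exact h ⟨x, lt_of_le_of_ne (P.R_le hx) hne, P.R_sub hx⟩
    simp [this]

lemma card_below_succ_le (i : Fin n) :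
    (P.below i.succ).card ≤ (P.below i.castSucc).card + 1 := by
  refine (Finset.card_le_card (t := insert i.succ (P.below i.castSucc)) fun x hx => ?_).trans
    (Finset.card_insert_le _ _)
  rw [mem_below] at hx
  rw [Finset.mem_insert, mem_below]
  rcases (P.R_le hx).eq_or_lt with h | h
  · exact Or.inl h
  · exact Or.inr (P.R_restrict hx (Fin.le_castSucc_iff.2 h) (Fin.castSucc_le_succ i))

lemma card_below_lt {x y : Fin (n + 1)} (hxy : x < y) (h : P.R x y) :
    (P.below x).card < (P.below y).card := by
  refine Finset.card_lt_card (Finset.ssubset_iff_of_subset (fun u hu => ?_) |>.2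
    ⟨y, mem_below.2 (P.R_refl y), fun hy => ?_⟩)
  · exact mem_below.2 (P.R_trans (mem_below.1 hu) h)
  · exact hxy.not_ge (P.R_le (mem_below.1 hy))

lemma R_iff (x z : Fin (n + 1)) :
    P.R x z ↔ x ≤ z ∧ ∀ y, x < y → y ≤ z → (P.below x).card < (P.below y).card := by
  refine ⟨fun h => ⟨P.R_le h, fun y hxy hyz => P.card_below_lt hxy (P.R_restrict h hxy.le hyz)⟩,
    ?_⟩
  rintro ⟨hxz, h⟩
  induction z using Fin.induction with
  | zero => rw [Fin.le_zero_iff.1 hxz]; exact P.R_refl 0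
  | succ i ih =>
    rcases hxz.eq_or_lt with rfl | hlt
    · exact P.R_refl _
    have hx := ih (Fin.le_castSucc_iff.2 hlt)
      fun y hxy hyi => h y hxy (hyi.trans (Fin.castSucc_le_succ i))
    by_contra hn
    have hsub : P.below i.succ ⊆ insert i.succ ((P.below x).erase x) := by
      intro u hu
      rw [mem_below] at hu
      rw [Finset.mem_insert, Finset.mem_erase, mem_below]
      rcases (P.R_le hu).eq_or_lt with e | hui
      · exact Or.inl e
      have hui' := Fin.le_castSucc_iff.2 hui
      rcases le_or_gt x u with hxu | hux
      · exact absurd (P.R_trans (P.R_restrict hx hxu hui') hu) hn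
      · exact Or.inr ⟨hux.ne, P.R_restrict hu hux.le hlt.le⟩
    have h₁ := (Finset.card_le_card hsub).trans (Finset.card_insert_le _ _)
    rw [Finset.card_erase_add_one (mem_below.2 (P.R_refl x))] at h₁
    exact (h _ hlt le_rfl).not_ge h₁

lemma W_iff (x z : Fin (n + 1)) :
    P.W x z ↔ x ≤ z ∧ ∀ y, x < y → y ≤ z → 0 < P.code y := by
  simp only [code_pos_iff]
  refine ⟨fun h => ⟨P.W_le h, fun y hxy hyz => ⟨x, hxy, P.W_left h hxy.le hyz⟩⟩, ?_⟩
  rintro ⟨hxz, h⟩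
  induction z using Fin.induction with
  | zero => rw [Fin.le_zero_iff.1 hxz]; exact P.W_refl 0
  | succ i ih =>
    rcases hxz.eq_or_lt with rfl | hlt
    · exact P.W_refl _
    obtain ⟨u, hu, hw⟩ := h _ hlt le_rfl
    exact P.W_trans (ih (Fin.le_castSucc_iff.2 hlt)
      fun y hxy hyi => h y hxy (hyi.trans (Fin.castSucc_le_succ i)))
      (P.W_right hw (Fin.le_castSucc_iff.2 hu) (Fin.castSucc_le_succ i))

/-- The code of a pair as a `TransferCode`. -/
noncomputable def toCode : TransferCode n 0 :=
  ⟨P.code, by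
    have h := P.code_pos_iff 0
    simpa [Fin.not_lt_zero] using h, fun i => by
    rw [max_one_code]
    exact (le_max_right 1 _).trans ((P.max_one_code _).le.trans (P.card_below_succ_le i))⟩

lemma toCode_injective : Function.Injective (toCode (n := n)) := by
  intro P Q h
  have hc : P.code = Q.code := congrArg Subtype.val h
  ext x z
  · simp only [R_iff, ← max_one_code, hc]
  · simp only [W_iff, hc]

/-- The pair associated with a sequence. -/
def ofFun (c : Fin (n + 1) → ℕ) : ConvexTransferPair (Fin (n + 1)) where
  R x z := x ≤ z ∧ ∀ y, x < y → y ≤ z → max 1 (c x) < max 1 (c y)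
  W x z := x ≤ z ∧ ∀ y, x < y → y ≤ z → 0 < c y
  R_refl x := ⟨le_rfl, fun _ h₁ h₂ => absurd h₁ h₂.not_gt⟩
  R_trans := by
    rintro x y z ⟨hxy, h₁⟩ ⟨hyz, h₂⟩
    refine ⟨hxy.trans hyz, fun w hxw hwz => ?_⟩
    rcases le_or_gt w y with hwy | hyw
    · exact h₁ w hxw hwy
    · rcases hxy.eq_or_lt with rfl | hlt
      · exact h₂ w hyw hwz
      · exact (h₁ y hlt le_rfl).trans (h₂ w hyw hwz)
  R_restrict := fun ⟨_, h⟩ hxy hyz => ⟨hxy, fun w hxw hwy => h w hxw (hwy.trans hyz)⟩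
  R_sub := by
    rintro x z ⟨hxz, h⟩
    refine ⟨hxz, fun y hxy hyz => ?_⟩
    have := h y hxy hyz
    omega
  W_le h := h.1
  W_trans := by
    rintro x y z ⟨hxy, h₁⟩ ⟨hyz, h₂⟩
    refine ⟨hxy.trans hyz, fun w hxw hwz => ?_⟩
    rcases le_or_gt w y with hwy | hyw
    · exact h₁ w hxw hwy
    · exact h₂ w hyw hwz
  W_left := fun ⟨_, h⟩ hxy hyz => ⟨hxy, fun w hxw hwy => h w hxw (hwy.trans hyz)⟩
  W_right := fun ⟨_, h⟩ hxy hyz => ⟨hyz, fun w hyw hwz => h w (hxy.trans_lt hyw) hwz⟩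

lemma exists_R_of_le (c : TransferCode n 0) (z : Fin (n + 1)) (v : ℕ) (hv : 1 ≤ v)
    (hvz : v ≤ max 1 (c.1 z)) : ∃ x, (ofFun c.1).R x z ∧ max 1 (c.1 x) = v := by
  induction z using Fin.induction with
  | zero =>
    refine ⟨0, (ofFun c.1).R_refl 0, ?_⟩
    rw [c.2.1] at hvz ⊢
    omega
  | succ i ih =>
    rcases hvz.eq_or_lt with rfl | hlt
    · exact ⟨i.succ, (ofFun c.1).R_refl _, rfl⟩
    have := c.2.2 i
    obtain ⟨x, ⟨hxi, hx⟩, hxv⟩ := ih (by omega)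
    refine ⟨x, ⟨hxi.trans (Fin.castSucc_le_succ i), fun y hxy hy => ?_⟩, hxv⟩
    rcases hy.eq_or_lt with rfl | hy
    · rwa [hxv]
    · exact hx y hxy (Fin.le_castSucc_iff.2 hy)

lemma card_below_ofFun (c : TransferCode n 0) (z : Fin (n + 1)) :
    ((ofFun c.1).below z).card = max 1 (c.1 z) := by
  rw [← Nat.add_sub_cancel (max 1 (c.1 z)) 1, ← Nat.card_Icc]
  refine Finset.card_bij (fun x _ => max 1 (c.1 x)) (fun x hx => ?_) (fun x hx y hy hxy => ?_)
    (fun v hv => ?_)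
  · obtain ⟨hxz, h⟩ := mem_below.1 hx
    refine Finset.mem_Icc.2 ⟨le_max_left _ _, ?_⟩
    rcases hxz.eq_or_lt with rfl | hlt
    · exact le_rfl
    · exact (h z hlt le_rfl).le
  · obtain ⟨hxz, hx⟩ := mem_below.1 hx
    obtain ⟨hyz, hy⟩ := mem_below.1 hy
    rcases lt_trichotomy x y with h | h | h
    · exact absurd hxy (hx y h hyz).ne
    · exact h
    · exact absurd hxy (hy x h hxz).ne'
  · obtain ⟨hv₁, hv₂⟩ := Finset.mem_Icc.1 hv
    obtain ⟨x, hx, hxv⟩ := exists_R_of_le c z v hv₁ hv₂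
    exact ⟨x, mem_below.2 hx, hxv⟩

lemma code_ofFun (c : TransferCode n 0) (z : Fin (n + 1)) : (ofFun c.1).code z = c.1 z := by
  have hmax := (ofFun c.1).max_one_code z
  rw [card_below_ofFun] at hmax
  have hpos : 0 < (ofFun c.1).code z ↔ 0 < c.1 z := by
    rw [code_pos_iff]
    refine ⟨fun ⟨y, hyz, _, h⟩ => h z hyz le_rfl, fun hz => ?_⟩
    cases z using Fin.cases with
    | zero => exact absurd c.2.1 hz.ne'
    | succ i =>
      refine ⟨i.castSucc, Fin.castSucc_lt_succ, Fin.castSucc_le_succ i, fun y hy hyi => ?_⟩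
      rwa [le_antisymm hyi (Fin.castSucc_lt_iff_succ_le.1 hy)]
  omega

lemma toCode_bijective : Function.Bijective (toCode (n := n)) :=
  ⟨toCode_injective, fun c => ⟨ofFun c.1, Subtype.ext (funext (code_ofFun c))⟩⟩

end ConvexTransferPair

/-- The number of model structures on the category `[n]` is `C(2n+1, n)`. -/
theorem card_model_structures (n : ℕ) :
    Nat.card (ModelStructure (Fin (n + 1))) = Nat.choose (2 * n + 1) n := by
  rw [Nat.card_congr (Equiv.ofBijective _ ModelStructure.toPair_bijective),
    Nat.card_congr (Equiv.ofBijective _ ConvexTransferPair.toCode_bijective), TransferCode.card]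
  rfl
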